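/- Under the hypotheses of Lemma 5 (hexagon abcdef, a the only reflex vertex apart from possibly c, e, and c does not see e), the vertex a lies in the open triangle △(cde), and the vertex a sees each of c, d, and e. -/

import Mathlib

open scoped BigOperators

/-- Points in the plane. -/
abbrev Pt := ℝ × ℝ

/-- 2×2 determinant (cross product) of two plane vectors. -/
noncomputable def det2 (p q : Pt) : ℝ := p.1 * q.2 - p.2 * q.1

/-- Open half-plane strictly to the left of the directed line from `p` to `q`. -/
def Lhp (p q : Pt) : Set Pt := {x | 0 < det2 (q - p) (x - p)}

/-- Open half-plane strictly to the right of the directed line from `p` to `q`. -/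
def Rhp (p q : Pt) : Set Pt := {x | det2 (q - p) (x - p) < 0}

/-- The boundary of the polygon with vertices `v 0, …, v (n-1)`:
the union of its (cyclically consecutive) edges. -/
def polyBoundary {n : ℕ} [NeZero n] (v : Fin n → Pt) : Set Pt :=
  ⋃ i : Fin n, segment ℝ (v i) (v (i + 1))

/-- `v` describes a simple polygon: at least 3 distinct vertices, and two distinct
edges may only meet at a common endpoint. -/
def IsSimplePolygon {n : ℕ} [NeZero n] (v : Fin n → Pt) : Prop :=
  3 ≤ n ∧ Function.Injective v ∧
    ∀ i j : Fin n, i ≠ j →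
      segment ℝ (v i) (v (i + 1)) ∩ segment ℝ (v j) (v (j + 1)) ⊆
        ({v i, v (i + 1)} ∩ {v j, v (j + 1)} : Set Pt)

/-- The interior of the polygon: the union of the bounded connected components of the
complement of the boundary. -/
def polyInterior {n : ℕ} [NeZero n] (v : Fin n → Pt) : Set Pt :=
  {x | x ∉ polyBoundary v ∧
    Bornology.IsBounded (connectedComponentIn (polyBoundary v)ᶜ x)}

/-- The (closed) polygonal region: interior together with boundary. -/
def polyRegion {n : ℕ} [NeZero n] (v : Fin n → Pt) : Set Pt :=
  polyBoundary v ∪ polyInterior v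

/-- Twice the signed area of the polygon. -/
noncomputable def signedArea2 {n : ℕ} [NeZero n] (v : Fin n → Pt) : ℝ :=
  ∑ i : Fin n, det2 (v i) (v (i + 1))

/-- The vertices are listed in counterclockwise order. -/
def IsCCW {n : ℕ} [NeZero n] (v : Fin n → Pt) : Prop := 0 < signedArea2 v

/-- The vertex `v i` of a counterclockwise polygon is strictly convex
(interior angle strictly less than 180°). -/
def StrictlyConvexAt {n : ℕ} [NeZero n] (v : Fin n → Pt) (i : Fin n) : Prop :=
  0 < det2 (v i - v (i - 1)) (v (i + 1) - v i)

/-- The vertex `v i` of a counterclockwise polygon is reflex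
(interior angle greater than or equal to 180°). -/
def ReflexAt {n : ℕ} [NeZero n] (v : Fin n → Pt) (i : Fin n) : Prop :=
  det2 (v i - v (i - 1)) (v (i + 1) - v i) ≤ 0

/-- The wedge of vertex `v i`:  `L(v⁻, v) ∩ R(v⁺, v) ∩ interior P`. -/
def Wedge {n : ℕ} [NeZero n] (v : Fin n → Pt) (i : Fin n) : Set Pt :=
  Lhp (v (i - 1)) (v i) ∩ Rhp (v (i + 1)) (v i) ∩ polyInterior v

/-- `x` sees `y` inside the polygon `v`: the segment `xy` is contained in the region. -/
def Sees {n : ℕ} [NeZero n] (v : Fin n → Pt) (x y : Pt) : Prop :=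
  segment ℝ x y ⊆ polyRegion v

/-- The kernel of the polygon: the points of the region that see every point of it. -/
def polyKernel {n : ℕ} [NeZero n] (v : Fin n → Pt) : Set Pt :=
  {x ∈ polyRegion v | ∀ y ∈ polyRegion v, segment ℝ x y ⊆ polyRegion v}

/-- The open triangle on three points. -/
def openTriangle (a b c : Pt) : Set Pt := interior (convexHull ℝ {a, b, c})

/-- `a b c d` (in counterclockwise order) form a strictly convex quadrilateral. -/
def StrictConvexQuad (a b c d : Pt) : Prop :=
  0 < det2 (b - a) (c - b) ∧ 0 < det2 (c - b) (d - c) ∧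
    0 < det2 (d - c) (a - d) ∧ 0 < det2 (a - d) (b - a)

/-- The closed region of a quadrilateral cell. -/
noncomputable def quadSet (q : Pt × Pt × Pt × Pt) : Set Pt :=
  convexHull ℝ {q.1, q.2.1, q.2.2.1, q.2.2.2}

/-- The closed region of a triangular cell. -/
noncomputable def triSet (t : Pt × Pt × Pt) : Set Pt :=
  convexHull ℝ {t.1, t.2.1, t.2.2}

/-- The vertices of a quadrilateral cell. -/
noncomputable def quadVerts (q : Pt × Pt × Pt × Pt) : Finset Pt :=
  {q.1, q.2.1, q.2.2.1, q.2.2.2}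

/-- The vertices of a triangular cell. -/
noncomputable def triVerts (t : Pt × Pt × Pt) : Finset Pt :=
  {t.1, t.2.1, t.2.2}

/-- A strictly convex quadrangulation of a finite planar point set `S`:
a decomposition of `conv S` into strictly convex quadrilaterals and at most one
(nondegenerate) triangle, with pairwise disjoint interiors, whose vertex set contains
`S`, and such that no point of `S` is interior to a cell. -/
structure ConvexQuadrangulation (S : Finset Pt) where
  quads : Finset (Pt × Pt × Pt × Pt)
  tris : Finset (Pt × Pt × Pt)
  tris_card : tris.card ≤ 1
  quads_convex : ∀ q ∈ quads, StrictConvexQuad q.1 q.2.1 q.2.2.1 q.2.2.2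
  tris_nondeg : ∀ t ∈ tris, 0 < det2 (t.2.1 - t.1) (t.2.2 - t.2.1)
  covers : ((⋃ q ∈ quads, quadSet q) ∪ ⋃ t ∈ tris, triSet t) = convexHull ℝ (S : Set Pt)
  cells_disjoint : ((quadSet '' quads) ∪ (triSet '' tris)).Pairwise
    fun A B => interior A ∩ interior B = ∅
  verts_cover : (S : Set Pt) ⊆
    ((quads.biUnion quadVerts ∪ tris.biUnion triVerts : Finset Pt) : Set Pt)
  no_pt_in_quad_interior : ∀ q ∈ quads, ∀ p ∈ S, p ∉ interior (quadSet q)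
  no_pt_in_tri_interior : ∀ t ∈ tris, ∀ p ∈ S, p ∉ interior (triSet t)

/-- The Steiner points of a quadrangulation: vertices of the decomposition not in `S`. -/
noncomputable def steinerPoints (S : Finset Pt) (Q : ConvexQuadrangulation S) : Finset Pt :=
  (Q.quads.biUnion quadVerts ∪ Q.tris.biUnion triVerts) \ S


/-!
The polygon is reached through triangulations: if positively oriented triangles on the vertices
are glued along their edges until only polygon edges are left over, their union is compact and
can only be left through the boundary, so it lies in the region. Each triangulation of the
hexagon that uses the diagonal `ce` therefore yields a sign condition that must fail.

What is left is a sign analysis at `a`. The excluded triangulations force `e` to the right of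
`ab` and `c` to the left of `af`. If `d` failed to lie to the left of `ac` or to the right of
`ae`, then two edges, one of them at `d`, would cross, or the signed area would be nonpositive.
Hence the fan of diagonals `ac`, `ad`, `ae` triangulates the hexagon, and `a` is off the line `ce`
because otherwise `c` would see `e` through `a`.
-/

open Topology

/-- Twice the signed area of the triangle `pqr`; it is positive when `p`, `q`, `r` make a left
turn. All positions in the plane are compared through its sign. -/
noncomputable def orient (p q r : Pt) : ℝ := det2 (q - p) (r - p)

section Orient

theorem orient_def (p q r : Pt) :
    orient p q r = (q.1 - p.1) * (r.2 - p.2) - (q.2 - p.2) * (r.1 - p.1) :=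
  rfl

@[simp]
theorem orient_left_left (p q : Pt) : orient p p q = 0 := by
  simp [orient_def]

@[simp]
theorem orient_self_left (p q : Pt) : orient p q p = 0 := by
  simp [orient_def]

@[simp]
theorem orient_self_right (p q : Pt) : orient p q q = 0 := by
  simp only [orient_def]; ring

theorem orient_rotate (p q r : Pt) : orient q r p = orient p q r := by
  simp only [orient_def]; ring

theorem orient_swap_left (p q r : Pt) : orient q p r = -orient p q r := by
  simp only [orient_def]; ring

theorem orient_swap_right (p q r : Pt) : orient p r q = -orient p q r := by
  simp only [orient_def]; ring

theorem orient_prodSwap (p q r : Pt) : orient p.swap q.swap r.swap = orient p r q := by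
  simp only [orient_def, Prod.fst_swap, Prod.snd_swap]; ring

theorem orient_eq_of_base (o p q r : Pt) :
    orient p q r = orient o p q + orient o q r - orient o p r := by
  simp only [orient_def]; ring

theorem orient_plucker (o p q r s : Pt) :
    orient o p q * orient o r s - orient o p r * orient o q s + orient o p s * orient o q r
      = 0 := by
  simp only [orient_def]; ring

theorem orient_smul_add_smul (p q x y : Pt) {s t : ℝ} (hst : s + t = 1) :
    orient p q (s • x + t • y) = s * orient p q x + t * orient p q y := by
  obtain rfl : s = 1 - t := by linarith
  simp only [orient_def, Prod.fst_add, Prod.snd_add, Prod.smul_fst, Prod.smul_snd, smul_eq_mul]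
  ring

theorem orient_smul_barycentric (p q r x : Pt) :
    orient p q r • x = orient q r x • p + orient r p x • q + orient p q x • r := by
  ext <;>
    simp only [orient_def, Prod.fst_add, Prod.snd_add, Prod.smul_fst, Prod.smul_snd,
      smul_eq_mul] <;>
    ring

theorem continuous_orient (p q : Pt) : Continuous (orient p q) := by
  simp only [funext (orient_def p q)]; fun_prop

theorem eventually_orient_pos {p q x : Pt} (h : 0 < orient p q x) :
    ∀ᶠ y in 𝓝 x, 0 < orient p q y :=
  (continuous_orient p q).continuousAt.eventually_const_lt h

theorem convex_setOf_orient_nonneg (p q : Pt) : Convex ℝ {x | 0 ≤ orient p q x} := by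
  intro x hx y hy s t hs ht hst
  rw [Set.mem_ofPred_eq] at hx hy ⊢
  rw [orient_smul_add_smul p q x y hst]
  positivity

end Orient

section Segment

theorem segment_inter_segment_nonempty {p q r s : Pt} (hr : 0 ≤ orient p q r)
    (hs : orient p q s ≤ 0) (hrs : orient p q s < orient p q r) (hp : orient r s p ≤ 0)
    (hq : 0 ≤ orient r s q) : (segment ℝ p q ∩ segment ℝ r s).Nonempty := by
  set D := orient p q r - orient p q s with hD
  have hD_pos : 0 < D := sub_pos.2 hrs
  have hD_eq : D = orient r s q - orient r s p := by simp only [hD, orient_def]; ring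
  have hpq : orient r s q / D + -orient r s p / D = 1 := by
    rw [← add_div, div_eq_one_iff_eq hD_pos.ne']; linarith
  have hsr : -orient p q s / D + orient p q r / D = 1 := by
    rw [← add_div, div_eq_one_iff_eq hD_pos.ne']; linarith
  have hpoint : orient r s q • p + -orient r s p • q = -orient p q s • r + orient p q r • s := by
    ext <;>
      simp only [orient_def, Prod.fst_add, Prod.snd_add, Prod.smul_fst, Prod.smul_snd,
        smul_eq_mul] <;>
      ring
  refine ⟨(orient r s q / D) • p + (-orient r s p / D) • q,
    ⟨_, _, by positivity, div_nonneg (neg_nonneg.2 hp) hD_pos.le, hpq, rfl⟩,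
    ⟨_, _, div_nonneg (neg_nonneg.2 hs) hD_pos.le, by positivity, hsr, ?_⟩⟩
  simp only [div_eq_inv_mul, mul_smul, ← smul_add, hpoint]

theorem segment_subset_union_of_mem {x y z : Pt} (hz : z ∈ segment ℝ x y) :
    segment ℝ x y ⊆ segment ℝ x z ∪ segment ℝ z y := by
  have hz_line : z ∈ Set.range (AffineMap.lineMap x y : ℝ → Pt) := by
    rw [segment_eq_image_lineMap] at hz
    exact Set.image_subset_range _ _ hz
  rw [← insert_endpoints_openSegment]
  rintro w (rfl | rfl | hw)
  · exact Or.inl (left_mem_segment ℝ _ _)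
  · exact Or.inr (right_mem_segment ℝ _ _)
  rcases openSegment_subset_union x y hz_line hw with rfl | hw | hw
  · exact Or.inr (left_mem_segment ℝ _ _)
  · exact Or.inl (openSegment_subset_segment ℝ _ _ hw)
  · exact Or.inr (openSegment_subset_segment ℝ _ _ hw)

theorem disjoint_segment_prodSwap {p q r s : Pt} (h : Disjoint (segment ℝ p q) (segment ℝ r s)) :
    Disjoint (segment ℝ p.swap q.swap) (segment ℝ r.swap s.swap) := by
  let σ : Pt →ᵃ[ℝ] Pt := (LinearEquiv.prodComm ℝ ℝ ℝ).toLinearMap.toAffineMap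
  have hσ : Function.Injective σ := Prod.swap_injective
  have himage (x y : Pt) : σ '' segment ℝ x y = segment ℝ x.swap y.swap := image_segment ℝ σ x y
  rw [← himage, ← himage]
  exact (Set.disjoint_image_iff hσ).2 h

end Segment

section Triangle

variable {p q r x : Pt}

theorem triSet_rotate (p q r : Pt) : triSet (q, r, p) = triSet (p, q, r) := by
  simp only [triSet, Set.pair_comm r p, Set.insert_comm q p]

theorem isCompact_triSet (t : Pt × Pt × Pt) : IsCompact (triSet t) :=
  (Set.toFinite _).isCompact_convexHull ℝ

theorem mem_triSet_iff (h : 0 < orient p q r) :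
    x ∈ triSet (p, q, r) ↔ 0 ≤ orient p q x ∧ 0 ≤ orient q r x ∧ 0 ≤ orient r p x := by
  constructor
  · have hqrp : 0 ≤ orient q r p := (orient_rotate p q r).symm ▸ h.le
    have hrpq : 0 ≤ orient r p q := orient_rotate r p q ▸ h.le
    refine fun hx ↦ convexHull_min (t := {y | 0 ≤ orient p q y ∧ 0 ≤ orient q r y ∧
      0 ≤ orient r p y}) ?_ ?_ hx
    · rintro y (rfl | rfl | rfl) <;> simp [h.le, hqrp, hrpq]
    · exact (convex_setOf_orient_nonneg p q).inter
        ((convex_setOf_orient_nonneg q r).inter (convex_setOf_orient_nonneg r p))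
  · rintro ⟨hpq, hqr, hrp⟩
    have hsum : orient q r x / orient p q r + orient r p x / orient p q r
        + orient p q x / orient p q r = 1 := by
      rw [← add_div, ← add_div, div_eq_one_iff_eq h.ne']
      simp only [orient_def]; ring
    have hx : x = (orient q r x / orient p q r) • p + (orient r p x / orient p q r) • q
        + (orient p q x / orient p q r) • r := by
      simp only [div_eq_inv_mul, mul_smul, ← smul_add, ← orient_smul_barycentric,
        inv_smul_smul₀ h.ne']
    have hmem := (convex_convexHull ℝ ({p, q, r} : Set Pt)).sum_mem (t := Finset.univ)
      (w := ![orient q r x / orient p q r, orient r p x / orient p q r,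
        orient p q x / orient p q r])
      (z := ![p, q, r])
      (fun i _ ↦ by
        fin_cases i
        exacts [div_nonneg hqr h.le, div_nonneg hrp h.le, div_nonneg hpq h.le])
      (by rw [Fin.sum_univ_three]; exact hsum)
      (fun i _ ↦ subset_convexHull ℝ _ (by fin_cases i <;> simp))
    rw [Fin.sum_univ_three] at hmem
    rw [hx]
    exact hmem

theorem mem_openTriangle_of_orient_pos (hpq : 0 < orient p q x) (hqr : 0 < orient q r x)
    (hrp : 0 < orient r p x) : x ∈ openTriangle p q r := by
  have h : 0 < orient p q r := by
    linarith [orient_eq_of_base x p q r, orient_rotate x p q, orient_rotate x q r,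
      orient_rotate x r p, orient_swap_right x p r]
  rw [openTriangle, mem_interior_iff_mem_nhds]
  filter_upwards [eventually_orient_pos hpq, eventually_orient_pos hqr, eventually_orient_pos hrp]
    with y hy_pq hy_qr hy_rp
  exact (mem_triSet_iff h).2 ⟨hy_pq.le, hy_qr.le, hy_rp.le⟩

theorem mem_segment_of_mem_triSet (h : 0 < orient p q r) (hx : x ∈ triSet (p, q, r))
    (hpq : orient p q x = 0) : x ∈ segment ℝ p q := by
  obtain ⟨-, hqr, hrp⟩ := (mem_triSet_iff h).1 hx
  have hbary : orient p q r • x = orient q r x • p + orient r p x • q := by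
    simpa [hpq] using orient_smul_barycentric p q r x
  have hsum : orient q r x + orient r p x = orient p q r := by
    linarith [orient_eq_of_base x p q r, orient_rotate x p q, orient_rotate x q r,
      orient_rotate x r p, orient_swap_right x p r]
  refine ⟨orient q r x / orient p q r, orient r p x / orient p q r, by positivity, by positivity,
    by rw [← add_div, hsum, div_self h.ne'], ?_⟩
  simp only [div_eq_inv_mul, mul_smul, ← smul_add, ← hbary, inv_smul_smul₀ h.ne']

theorem triSet_union_mem_nhds {s : Pt} (hr : 0 < orient p q r) (hs : 0 < orient q p s)
    (hx : x ∈ openSegment ℝ p q) : triSet (p, q, r) ∪ triSet (q, p, s) ∈ 𝓝 x := by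
  obtain ⟨α, β, hα, hβ, hαβ, rfl⟩ := hx
  have hqr : 0 < orient q r (α • p + β • q) := by
    rw [orient_smul_add_smul _ _ _ _ hαβ, orient_self_left, orient_rotate p q r]; positivity
  have hrp : 0 < orient r p (α • p + β • q) := by
    rw [orient_smul_add_smul _ _ _ _ hαβ, orient_self_right, ← orient_rotate r p q]; positivity
  have hps : 0 < orient p s (α • p + β • q) := by
    rw [orient_smul_add_smul _ _ _ _ hαβ, orient_self_left, orient_rotate q p s]; positivity
  have hsq : 0 < orient s q (α • p + β • q) := by
    rw [orient_smul_add_smul _ _ _ _ hαβ, orient_self_right, ← orient_rotate s q p]; positivity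
  filter_upwards [eventually_orient_pos hqr, eventually_orient_pos hrp, eventually_orient_pos hps,
    eventually_orient_pos hsq] with y hy_qr hy_rp hy_ps hy_sq
  rcases le_total 0 (orient p q y) with hy | hy
  · exact Or.inl ((mem_triSet_iff hr).2 ⟨hy, hy_qr.le, hy_rp.le⟩)
  · exact Or.inr ((mem_triSet_iff hs).2 ⟨by linarith [orient_swap_left p q y], hy_ps.le, hy_sq.le⟩)

end Triangle

section Polygon

variable {n : ℕ} [NeZero n] {v : Fin n → Pt}

theorem segment_subset_polyBoundary (v : Fin n → Pt) (i : Fin n) :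
    segment ℝ (v i) (v (i + 1)) ⊆ polyBoundary v :=
  Set.subset_iUnion (fun i : Fin n ↦ segment ℝ (v i) (v (i + 1))) i

theorem vertex_mem_polyBoundary (v : Fin n → Pt) (i : Fin n) : v i ∈ polyBoundary v :=
  segment_subset_polyBoundary v i (left_mem_segment ℝ _ _)

theorem isClosed_polyBoundary (v : Fin n → Pt) : IsClosed (polyBoundary v) := by
  refine isClosed_iUnion_of_finite fun i ↦ ?_
  rw [← convexHull_pair]
  exact (Set.toFinite _).isClosed_convexHull ℝ

theorem strictlyConvexAt_iff {i : Fin n} :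
    StrictlyConvexAt v i ↔ 0 < orient (v (i - 1)) (v i) (v (i + 1)) := by
  rw [StrictlyConvexAt, orient_def, det2]
  simp only [Prod.fst_sub, Prod.snd_sub]
  constructor <;> intro h <;> linarith

theorem reflexAt_iff {i : Fin n} : ReflexAt v i ↔ orient (v (i - 1)) (v i) (v (i + 1)) ≤ 0 := by
  simpa [StrictlyConvexAt, ReflexAt] using (strictlyConvexAt_iff (v := v) (i := i)).not

theorem signedArea2_eq_sum_orient (v : Fin n → Pt) (o : Pt) :
    signedArea2 v = ∑ i, orient o (v i) (v (i + 1)) := by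
  have hshift : ∑ i, det2 o (v (i + 1)) = ∑ i, det2 o (v i) :=
    Equiv.sum_comp (Equiv.addRight (1 : Fin n)) fun i ↦ det2 o (v i)
  have horient (i : Fin n) : orient o (v i) (v (i + 1))
      = det2 (v i) (v (i + 1)) + (det2 o (v i) - det2 o (v (i + 1))) := by
    simp only [orient_def, det2]; ring
  simp only [horient, Finset.sum_add_distrib, Finset.sum_sub_distrib, hshift, sub_self, add_zero,
    signedArea2]

theorem IsSimplePolygon.disjoint_edges (hv : IsSimplePolygon v) {i j : Fin n} (hij : i ≠ j)
    (hij' : i ≠ j + 1) (hji' : i + 1 ≠ j) :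
    Disjoint (segment ℝ (v i) (v (i + 1))) (segment ℝ (v j) (v (j + 1))) := by
  obtain ⟨-, hinj, hmeet⟩ := hv
  refine Set.disjoint_left.2 fun x hxi hxj ↦ ?_
  obtain ⟨rfl | rfl, hx | hx⟩ := hmeet i j hij ⟨hxi, hxj⟩
  · exact hij (hinj hx)
  · exact hij' (hinj hx)
  · exact hji' (hinj hx)
  · exact hij (add_right_cancel (hinj hx))

theorem Sees.symm {x y : Pt} (h : Sees v x y) : Sees v y x := by
  rwa [Sees, segment_symm]

theorem Sees.of_mem_segment {x y z : Pt} (hxz : Sees v x z) (hzy : Sees v z y)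
    (hz : z ∈ segment ℝ x y) : Sees v x y :=
  (segment_subset_union_of_mem hz).trans (Set.union_subset hxz hzy)

theorem subset_polyRegion_of_isCompact {U : Set Pt} (hU : IsCompact U)
    (hnhds : ∀ x ∈ U \ polyBoundary v, U ∈ 𝓝 x) : U ⊆ polyRegion v := by
  intro x hxU
  by_cases hxB : x ∈ polyBoundary v
  · exact Or.inl hxB
  have hopen : IsOpen (U \ polyBoundary v) := isOpen_iff_mem_nhds.2 fun y hy ↦
    Filter.inter_mem (hnhds y hy) ((isClosed_polyBoundary v).isOpen_compl.mem_nhds hy.2)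
  -- `U` is clopen relative to the complement of the boundary, so it traps the component of `x`.
  have hcomponent : connectedComponentIn (polyBoundary v)ᶜ x ⊆ U \ polyBoundary v :=
    isPreconnected_connectedComponentIn.subset_left_of_subset_union hopen hU.isClosed.isOpen_compl
      (Set.disjoint_left.2 fun y hy hyU ↦ hyU hy.1)
      (fun y hy ↦ (em (y ∈ U)).imp (⟨·, connectedComponentIn_subset _ _ hy⟩) id)
      ⟨x, mem_connectedComponentIn hxB, hxU, hxB⟩
  exact Or.inr ⟨hxB, hU.isBounded.subset (hcomponent.trans Set.sdiff_subset)⟩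

end Polygon

section Triangulation

variable {ι : Type*}

/-- `i → j → k` are the corners, in this cyclic order, of a triangle listed in `T` with an
arbitrary choice of first corner. -/
def CyclicMem (T : List (ι × ι × ι)) (i j k : ι) : Prop :=
  (i, j, k) ∈ T ∨ (j, k, i) ∈ T ∨ (k, i, j) ∈ T

instance [DecidableEq ι] (T : List (ι × ι × ι)) (i j k : ι) : Decidable (CyclicMem T i j k) :=
  inferInstanceAs (Decidable (_ ∨ _ ∨ _))

theorem CyclicMem.rotate {T : List (ι × ι × ι)} {i j k : ι} (h : CyclicMem T i j k) :
    CyclicMem T j k i := by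
  rcases h with h | h | h
  exacts [Or.inr (Or.inr h), Or.inl h, Or.inr (Or.inl h)]

theorem CyclicMem.orient_pos {v : ι → Pt} {T : List (ι × ι × ι)}
    (hpos : ∀ t ∈ T, 0 < orient (v t.1) (v t.2.1) (v t.2.2)) {i j k : ι}
    (h : CyclicMem T i j k) : 0 < orient (v i) (v j) (v k) := by
  rcases h with h | h | h
  · exact hpos _ h
  · exact orient_rotate (v i) (v j) (v k) ▸ hpos _ h
  · exact orient_rotate (v k) (v i) (v j) ▸ hpos _ h

variable {n : ℕ} [NeZero n] {v : Fin n → Pt} {T : List (Fin n × Fin n × Fin n)}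

theorem CyclicMem.triSet_subset_polyRegion
    (hpos : ∀ t ∈ T, 0 < orient (v t.1) (v t.2.1) (v t.2.2))
    (hglue : ∀ i j k, CyclicMem T i j k → j = i + 1 ∨ ∃ l, CyclicMem T j i l)
    {i j k : Fin n} (h : CyclicMem T i j k) : triSet (v i, v j, v k) ⊆ polyRegion v := by
  set U : Set Pt := ⋃ (i) (j) (k) (_ : CyclicMem T i j k), triSet (v i, v j, v k) with hU_def
  have hsub {i j k : Fin n} (h : CyclicMem T i j k) : triSet (v i, v j, v k) ⊆ U := fun x hx ↦ by
    simp only [hU_def, Set.mem_iUnion]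
    exact ⟨i, j, k, h, hx⟩
  have hU : IsCompact U := isCompact_iUnion fun i ↦ isCompact_iUnion fun j ↦
    isCompact_iUnion fun k ↦ isCompact_iUnion fun _ ↦ isCompact_triSet _
  have hedge {i j k : Fin n} {x : Pt} (h : CyclicMem T i j k) (hx : x ∈ triSet (v i, v j, v k))
      (hxB : x ∉ polyBoundary v) (h0 : orient (v i) (v j) x = 0) : U ∈ 𝓝 x := by
    have hseg := mem_segment_of_mem_triSet (h.orient_pos hpos) hx h0
    rcases hglue i j k h with rfl | ⟨l, hl⟩
    · exact absurd (segment_subset_polyBoundary v i hseg) hxB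
    have hopen : x ∈ openSegment ℝ (v i) (v j) := mem_openSegment_of_ne_left_right
      (fun hi ↦ hxB (hi ▸ vertex_mem_polyBoundary v i))
      (fun hj ↦ hxB (hj ▸ vertex_mem_polyBoundary v j)) hseg
    exact Filter.mem_of_superset
      (triSet_union_mem_nhds (h.orient_pos hpos) (hl.orient_pos hpos) hopen)
      (Set.union_subset (hsub h) (hsub hl))
  refine (hsub h).trans (subset_polyRegion_of_isCompact hU fun x ⟨hxU, hxB⟩ ↦ ?_)
  obtain ⟨i, j, k, h, hx⟩ : ∃ i j k, ∃ _ : CyclicMem T i j k, x ∈ triSet (v i, v j, v k) := by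
    simpa only [hU_def, Set.mem_iUnion] using hxU
  obtain ⟨hij, hjk, hki⟩ := (mem_triSet_iff (h.orient_pos hpos)).1 hx
  rcases hij.eq_or_lt' with hij | hij
  · exact hedge h hx hxB hij
  rcases hjk.eq_or_lt' with hjk | hjk
  · exact hedge h.rotate (by rwa [triSet_rotate]) hxB hjk
  rcases hki.eq_or_lt' with hki | hki
  · exact hedge h.rotate.rotate (by rwa [triSet_rotate, triSet_rotate]) hxB hki
  exact Filter.mem_of_superset
    (mem_interior_iff_mem_nhds.1 (mem_openTriangle_of_orient_pos hij hjk hki)) (hsub h)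

theorem CyclicMem.sees (hpos : ∀ t ∈ T, 0 < orient (v t.1) (v t.2.1) (v t.2.2))
    (hglue : ∀ i j k, CyclicMem T i j k → j = i + 1 ∨ ∃ l, CyclicMem T j i l)
    {i j k : Fin n} (h : CyclicMem T i j k) : Sees v (v i) (v j) :=
  ((convex_convexHull ℝ _).segment_subset (subset_convexHull ℝ _ (by simp))
    (subset_convexHull ℝ _ (by simp))).trans (h.triSet_subset_polyRegion hpos hglue)

end Triangulation

/-- The hexagons `abcdef` in which `c` may fail to see `e`, as sign conditions on triples of
vertices. Besides the convexity at `b`, `d`, `f`, the reflex angle at `a`, the positive area and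
the disjointness of edges, the fields `ace`, `cef` and `bce` each negate one triangulation
containing the diagonal `ce`. The class is closed under reversing the hexagon in a mirror that
fixes `a` and `d`. -/
structure BlockedHexagon (a b c d e f : Pt) : Prop where
  abc : 0 < orient a b c
  cde : 0 < orient c d e
  aef : 0 < orient a e f
  abf : orient a b f ≤ 0
  area_pos : 0 < orient a b c + orient a c d + orient a d e + orient a e f
  ace : orient a c e ≤ 0
  cef : 0 < orient a c f → orient c e f ≤ 0
  bce : 0 < orient a b e → orient b c e ≤ 0
  ab_cd : Disjoint (segment ℝ a b) (segment ℝ c d)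
  ab_de : Disjoint (segment ℝ a b) (segment ℝ d e)
  bc_de : Disjoint (segment ℝ b c) (segment ℝ d e)
  bc_ef : Disjoint (segment ℝ b c) (segment ℝ e f)
  cd_ef : Disjoint (segment ℝ c d) (segment ℝ e f)
  cd_fa : Disjoint (segment ℝ c d) (segment ℝ f a)
  de_fa : Disjoint (segment ℝ d e) (segment ℝ f a)

namespace BlockedHexagon

variable {a b c d e f : Pt}

theorem mirror (H : BlockedHexagon a b c d e f) :
    BlockedHexagon a.swap f.swap e.swap d.swap c.swap b.swap where
  abc := by simpa only [orient_prodSwap] using H.aef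
  cde := by simpa only [orient_prodSwap, orient_rotate] using H.cde
  aef := by simpa only [orient_prodSwap] using H.abc
  abf := by simpa only [orient_prodSwap] using H.abf
  area_pos := by simp only [orient_prodSwap]; linarith [H.area_pos]
  ace := by simpa only [orient_prodSwap] using H.ace
  cef := by simpa only [orient_prodSwap, orient_rotate] using H.bce
  bce := by simpa only [orient_prodSwap, orient_rotate] using H.cef
  ab_cd := disjoint_segment_prodSwap (by simpa only [segment_symm] using H.de_fa.symm)
  ab_de := disjoint_segment_prodSwap (by simpa only [segment_symm] using H.cd_fa.symm)
  bc_de := disjoint_segment_prodSwap (by simpa only [segment_symm] using H.cd_ef.symm)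
  bc_ef := disjoint_segment_prodSwap (by simpa only [segment_symm] using H.bc_ef.symm)
  cd_ef := disjoint_segment_prodSwap (by simpa only [segment_symm] using H.bc_de.symm)
  cd_fa := disjoint_segment_prodSwap (by simpa only [segment_symm] using H.ab_de.symm)
  de_fa := disjoint_segment_prodSwap (by simpa only [segment_symm] using H.ab_cd.symm)

theorem orient_abe_mul_orient_acf_pos (H : BlockedHexagon a b c d e f) :
    0 < orient a b e * orient a c f := by
  nlinarith [orient_plucker a b c e f, mul_pos H.abc H.aef,
    mul_nonneg_of_nonpos_of_nonpos H.abf H.ace]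

theorem orient_abe_neg (H : BlockedHexagon a b c d e f) : orient a b e < 0 := by
  by_contra! habe
  have hacf : 0 < orient a c f := pos_of_mul_pos_right H.orient_abe_mul_orient_acf_pos habe
  have hbce := H.bce (pos_of_mul_pos_left H.orient_abe_mul_orient_acf_pos hacf.le)
  have hcef := H.cef hacf
  have hbcf : 0 < orient b c f := by
    linarith [orient_eq_of_base a b c f, H.abc, H.abf]
  have hefb : 0 < orient e f b := by
    linarith [orient_eq_of_base a e f b, H.aef, H.abf, orient_swap_right a b f,
      orient_swap_right a b e]
  have hcross := segment_inter_segment_nonempty (p := b) (q := c) (r := f) (s := e) hbcf.le hbce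
    (hbce.trans_lt hbcf) (by linarith [orient_swap_left e f b])
    (by linarith [orient_swap_left e f c, orient_rotate c e f])
  rw [segment_symm ℝ f e] at hcross
  exact hcross.not_disjoint H.bc_ef

theorem orient_deb_neg (H : BlockedHexagon a b c d e f) (habd : 0 ≤ orient a b d)
    (hade : orient a d e ≤ 0) : orient d e b < 0 := by
  by_contra! hdeb
  have hcross := segment_inter_segment_nonempty (p := a) (q := b) (r := d) (s := e) habd
    H.orient_abe_neg.le (H.orient_abe_neg.trans_le habd) (by rwa [orient_rotate]) hdeb
  exact hcross.not_disjoint H.ab_de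

theorem orient_bcd_neg_of_abd_nonneg (H : BlockedHexagon a b c d e f) (habd : 0 ≤ orient a b d)
    (hade : orient a d e ≤ 0) : orient b c d < 0 := by
  have hdeb := H.orient_deb_neg habd hade
  have hdec : 0 < orient d e c := by rw [orient_rotate]; exact H.cde
  have hbce : orient b c e < 0 := by
    have hidentity : orient b c e * orient a d e
        = orient d e c * -orient a b e + -orient d e b * -orient a c e := by
      simp only [orient_def]; ring
    have : 0 < orient b c e * orient a d e := by
      rw [hidentity]
      exact add_pos_of_pos_of_nonneg (mul_pos hdec (neg_pos.2 H.orient_abe_neg))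
        (mul_nonneg (neg_pos.2 hdeb).le (neg_nonneg.2 H.ace))
    exact neg_of_mul_pos_left this hade
  by_contra! hbcd
  have hcross := segment_inter_segment_nonempty hbcd hbce.le (hbce.trans_le hbcd) hdeb.le hdec.le
  exact hcross.not_disjoint H.bc_de

theorem orient_ade_pos_of_acd_pos (H : BlockedHexagon a b c d e f) (hacd : 0 < orient a c d) :
    0 < orient a d e := by
  by_contra! hade
  have habe := H.orient_abe_neg
  have habd : 0 < orient a b d := by
    have : orient a b d * orient a c e < 0 := by
      linarith [orient_plucker a b c d e, mul_nonpos_of_nonneg_of_nonpos H.abc.le hade,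
        mul_neg_of_neg_of_pos habe hacd]
    exact pos_of_mul_neg_left this H.ace
  have hdeb := H.orient_deb_neg habd.le hade
  have hbcd := H.orient_bcd_neg_of_abd_nonneg habd.le hade
  have hdec : 0 < orient d e c := by rw [orient_rotate]; exact H.cde
  have hidentity : orient b c d * -orient a d e
      = orient d e c * orient a b d + -orient d e b * orient a c d := by
    simp only [orient_def]; ring
  have hpos : 0 < orient b c d * -orient a d e := by
    rw [hidentity]
    exact add_pos (mul_pos hdec habd) (mul_pos (neg_pos.2 hdeb) hacd)
  exact hpos.not_ge (mul_nonpos_of_nonpos_of_nonneg hbcd.le (neg_nonneg.2 hade))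

theorem orient_acd_pos_of_ade_pos (H : BlockedHexagon a b c d e f) (hade : 0 < orient a d e) :
    0 < orient a c d := by
  simpa only [orient_prodSwap] using
    H.mirror.orient_ade_pos_of_acd_pos (by rwa [orient_prodSwap])

theorem orient_bcd_neg (H : BlockedHexagon a b c d e f) (hacd : orient a c d ≤ 0)
    (hade : orient a d e ≤ 0) : orient b c d < 0 := by
  rcases le_total 0 (orient a b d) with habd | habd
  · exact H.orient_bcd_neg_of_abd_nonneg habd hade
  by_contra! hbcd
  have hbad : 0 ≤ orient b a d := by linarith [orient_swap_left a b d]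
  have hbac : orient b a c < 0 := by linarith [orient_swap_left a b c, H.abc]
  have hcross := segment_inter_segment_nonempty (p := b) (q := a) (r := d) (s := c) hbad hbac.le
    (hbac.trans_le hbad) (by linarith [orient_swap_left c d b, orient_rotate b c d])
    (by linarith [orient_swap_left c d a, orient_rotate a c d])
  rw [segment_symm ℝ b, segment_symm ℝ d] at hcross
  exact hcross.not_disjoint H.ab_cd

theorem orient_def_neg (H : BlockedHexagon a b c d e f) (hacd : orient a c d ≤ 0)
    (hade : orient a d e ≤ 0) : orient d e f < 0 := by
  simpa only [orient_prodSwap, orient_rotate] using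
    H.mirror.orient_bcd_neg (by rwa [orient_prodSwap]) (by rwa [orient_prodSwap])

theorem orient_abd_add_ade_add_aef_nonpos (H : BlockedHexagon a b c d e f) (hacd : orient a c d ≤ 0)
    (hade : orient a d e ≤ 0) (habd : 0 ≤ orient a b d) :
    orient a b d + orient a d e + orient a e f ≤ 0 := by
  have habe := H.orient_abe_neg
  have hplucker := orient_plucker a b d e f
  have hbf_de := mul_nonneg_of_nonpos_of_nonpos H.abf hade
  have hadf : orient a d f ≤ 0 := by
    by_contra! hadf
    linarith [mul_neg_of_neg_of_pos habe hadf, mul_nonneg habd H.aef.le]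
  have hdeb : orient a d e + orient a b d < orient a b e := by
    linarith [H.orient_deb_neg habd hade, orient_eq_of_base a d e b, orient_swap_right a b e,
      orient_swap_right a b d]
  have hdef : orient a d e + orient a e f < orient a d f := by
    linarith [H.orient_def_neg hacd hade, orient_eq_of_base a d e f]
  have hproduct : orient a b d * orient a e f
      ≤ (orient a d e + orient a b d) * (orient a d e + orient a e f) :=
    calc orient a b d * orient a e f
      _ ≤ orient a b e * orient a d f := by linarith
      _ ≤ _ := mul_le_mul_of_nonpos_of_nonpos hdeb.le hdef.le (by linarith) hadf
  have : 0 ≤ orient a d e * (orient a b d + orient a d e + orient a e f) := by linarith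
  exact nonpos_of_mul_nonneg_right this (by linarith)

theorem orient_acd_pos_or_orient_ade_pos (H : BlockedHexagon a b c d e f) :
    0 < orient a c d ∨ 0 < orient a d e := by
  by_contra! ⟨hacd, hade⟩
  have hbcd := H.orient_bcd_neg hacd hade
  have hdef := H.orient_def_neg hacd hade
  have hbcd_eq := orient_eq_of_base a b c d
  have hdef_eq := orient_eq_of_base a d e f
  have harea := H.area_pos
  rcases le_total 0 (orient a b d) with habd | habd
  · linarith [H.orient_abd_add_ade_add_aef_nonpos hacd hade habd]
  rcases le_total 0 (orient a d f) with hadf | hadf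
  · have hmirror : orient a d f + orient a c d + orient a b c ≤ 0 := by
      simpa only [orient_prodSwap] using H.mirror.orient_abd_add_ade_add_aef_nonpos
        (by rwa [orient_prodSwap]) (by rwa [orient_prodSwap]) (by rwa [orient_prodSwap])
    linarith
  · linarith

theorem orient_acd_pos (H : BlockedHexagon a b c d e f) : 0 < orient a c d :=
  H.orient_acd_pos_or_orient_ade_pos.elim id H.orient_acd_pos_of_ade_pos

theorem orient_ade_pos (H : BlockedHexagon a b c d e f) : 0 < orient a d e :=
  H.orient_ade_pos_of_acd_pos H.orient_acd_pos

theorem mem_segment_of_orient_eq_zero (H : BlockedHexagon a b c d e f) (hace : orient a c e = 0) :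
    a ∈ segment ℝ c e := by
  have heca : orient e c a = 0 := by
    linarith [orient_rotate a e c, orient_swap_right a c e]
  have hecd : 0 < orient e c d := by rw [← orient_rotate]; exact H.cde
  rw [segment_symm]
  refine mem_segment_of_mem_triSet hecd ((mem_triSet_iff hecd).2 ⟨heca.ge, ?_, ?_⟩) heca
  · rw [orient_rotate]; exact H.orient_acd_pos.le
  · rw [orient_rotate]; exact H.orient_ade_pos.le

end BlockedHexagon

section Hexagon

variable {v : Fin 6 → Pt}

theorem sees_of_fan_pos (h012 : 0 < orient (v 0) (v 1) (v 2)) (h023 : 0 < orient (v 0) (v 2) (v 3))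
    (h034 : 0 < orient (v 0) (v 3) (v 4)) (h045 : 0 < orient (v 0) (v 4) (v 5)) :
    Sees v (v 0) (v 2) ∧ Sees v (v 0) (v 3) ∧ Sees v (v 0) (v 4) := by
  have hpos : ∀ t ∈ [((0 : Fin 6), (1 : Fin 6), (2 : Fin 6)), (0, 2, 3), (0, 3, 4), (0, 4, 5)],
      0 < orient (v t.1) (v t.2.1) (v t.2.2) := by
    simp [h012, h023, h034, h045]
  exact ⟨CyclicMem.sees (k := 3) hpos (by decide) (by decide),
    CyclicMem.sees (k := 4) hpos (by decide) (by decide),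
    CyclicMem.sees (k := 5) hpos (by decide) (by decide)⟩

theorem blockedHexagon_of_not_sees (hsimple : IsSimplePolygon v) (hccw : IsCCW v)
    (ha : ReflexAt v 0) (hb : StrictlyConvexAt v 1) (hd : StrictlyConvexAt v 3)
    (hf : StrictlyConvexAt v 5) (hce : ¬ Sees v (v 2) (v 4)) :
    BlockedHexagon (v 0) (v 1) (v 2) (v 3) (v 4) (v 5) := by
  have habc : 0 < orient (v 0) (v 1) (v 2) := strictlyConvexAt_iff.1 hb
  have hcde : 0 < orient (v 2) (v 3) (v 4) := strictlyConvexAt_iff.1 hd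
  have hefa : 0 < orient (v 4) (v 5) (v 0) := strictlyConvexAt_iff.1 hf
  have hfab : orient (v 5) (v 0) (v 1) ≤ 0 := reflexAt_iff.1 ha
  have haef : 0 < orient (v 0) (v 4) (v 5) := orient_rotate (v 0) _ _ ▸ hefa
  exact
  { abc := habc
    cde := hcde
    aef := haef
    abf := by rwa [← orient_rotate] at hfab
    area_pos := by
      have harea : 0 < signedArea2 v := hccw
      rw [signedArea2_eq_sum_orient v (v 0), Fin.sum_univ_six] at harea
      simpa using harea
    ace := not_lt.1 fun hace ↦ hce <|
      CyclicMem.sees (T := [(0, 1, 2), (0, 2, 4), (2, 3, 4), (0, 4, 5)]) (k := 0)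
        (by simp [habc, hace, hcde, haef]) (by decide) (by decide)
    cef := fun hacf ↦ not_lt.1 fun hcef ↦ hce <|
      CyclicMem.sees (T := [(0, 1, 2), (0, 2, 5), (2, 3, 4), (2, 4, 5)]) (k := 5)
        (by simp [habc, hacf, hcde, hcef]) (by decide) (by decide)
    bce := fun habe ↦ not_lt.1 fun hbce ↦ hce <|
      CyclicMem.sees (T := [(0, 1, 4), (1, 2, 4), (2, 3, 4), (0, 4, 5)]) (k := 1)
        (by simp [habe, hbce, hcde, haef]) (by decide) (by decide)
    ab_cd := hsimple.disjoint_edges (i := 0) (j := 2) (by decide) (by decide) (by decide)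
    ab_de := hsimple.disjoint_edges (i := 0) (j := 3) (by decide) (by decide) (by decide)
    bc_de := hsimple.disjoint_edges (i := 1) (j := 3) (by decide) (by decide) (by decide)
    bc_ef := hsimple.disjoint_edges (i := 1) (j := 4) (by decide) (by decide) (by decide)
    cd_ef := hsimple.disjoint_edges (i := 2) (j := 4) (by decide) (by decide) (by decide)
    cd_fa := hsimple.disjoint_edges (i := 2) (j := 5) (by decide) (by decide) (by decide)
    de_fa := hsimple.disjoint_edges (i := 3) (j := 5) (by decide) (by decide) (by decide) }

end Hexagon

/-- Key step in the proof of Lemma 5: under its hypotheses (hexagon `abcdef`, `a` the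
only reflex vertex apart from possibly `c`, `e`, and `c` does not see `e`), the vertex
`a` lies in the open triangle `△(cde)` and sees each of `c`, `d`, `e`. -/
theorem lemma_obstruct_key_step (v : Fin 6 → Pt)
    (hsimple : IsSimplePolygon v) (hccw : IsCCW v)
    (ha : ReflexAt v 0)
    (hb : StrictlyConvexAt v 1) (hd : StrictlyConvexAt v 3) (hf : StrictlyConvexAt v 5)
    (hce : ¬ Sees v (v 2) (v 4)) :
    v 0 ∈ openTriangle (v 2) (v 3) (v 4) ∧
      Sees v (v 0) (v 2) ∧ Sees v (v 0) (v 3) ∧ Sees v (v 0) (v 4) := by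
  have H := blockedHexagon_of_not_sees hsimple hccw ha hb hd hf hce
  obtain ⟨hac, had, hae⟩ := sees_of_fan_pos H.abc H.orient_acd_pos H.orient_ade_pos H.aef
  have hace : orient (v 0) (v 2) (v 4) < 0 := H.ace.lt_of_ne fun h ↦
    hce (hac.symm.of_mem_segment hae (H.mem_segment_of_orient_eq_zero h))
  refine ⟨mem_openTriangle_of_orient_pos ?_ ?_ ?_, hac, had, hae⟩
  · rw [orient_rotate]; exact H.orient_acd_pos
  · rw [orient_rotate]; exact H.orient_ade_pos
  · rw [orient_rotate, orient_swap_right]; exact neg_pos.2 hace
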